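/- Assume moreover that 2p ≤ n−2. Then for every r ∈ (0,R] the function t ↦ h(t)^{n−2p−3}·ψ(t) is integrable on (0,r) (here n−2p−3 ≥ −1 is an integer, and the possibly negative integer power is taken of the positive real number h(t) for t > 0), and the integrated form of the ODE holds: h(r)^{n−2p−1}·ψ'(r) = λ·∫₀^r h(t)^{n−2p−3}·ψ(t) dt. -/

import Mathlib

open MeasureTheory Set

/-!
The factor `h ^ k` turns `ψ'' + k * (h' / h) * ψ' = c * ψ / h ^ 2` into
`(h ^ k * ψ')' = c * (h ^ (k - 2) * ψ)`. Both `h` and `ψ` vanish at the singular endpoint and `h`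
has nonzero slope there, so `ψ / h` has a finite limit and
`h ^ (k - 2) * ψ = h ^ (k - 1) * (ψ / h)` is integrable for `1 ≤ k`. As `h ^ k * ψ'` vanishes at
that endpoint, the fundamental theorem of calculus gives the integrated equation.
-/

open Filter Topology

theorem tendsto_div_of_hasDerivWithinAt {𝕜 : Type*} [NontriviallyNormedField 𝕜] {f g : 𝕜 → 𝕜}
    {f' g' a : 𝕜} {s : Set 𝕜} (hf : HasDerivWithinAt f f' s a) (hg : HasDerivWithinAt g g' s a)
    (hfa : f a = 0) (hga : g a = 0) (hg' : g' ≠ 0) :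
    Tendsto (fun t => f t / g t) (𝓝[s \ {a}] a) (𝓝 (f' / g')) := by
  have hslope : Tendsto (fun t => slope f a t / slope g a t) (𝓝[s \ {a}] a) (𝓝 (f' / g')) :=
    (hasDerivWithinAt_iff_tendsto_slope.1 hf).div (hasDerivWithinAt_iff_tendsto_slope.1 hg) hg'
  refine hslope.congr' ?_
  filter_upwards [self_mem_nhdsWithin] with t ht
  have hta : t - a ≠ 0 := sub_ne_zero.2 ht.2
  rw [slope_def_field, slope_def_field, hfa, hga, sub_zero, sub_zero, div_div_div_cancel_right₀ hta]

theorem integrableOn_diff_singleton_of_tendsto {X E : Type*} [TopologicalSpace X] [T2Space X]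
    [MeasurableSpace X] [OpensMeasurableSpace X] {μ : Measure X} [IsFiniteMeasureOnCompacts μ]
    [NormedAddCommGroup E] {f : X → E} {K : Set X} {a : X} {y : E} (hK : IsCompact K)
    (hf : ContinuousOn f (K \ {a})) (hlim : Tendsto f (𝓝[K \ {a}] a) (𝓝 y)) :
    IntegrableOn f (K \ {a}) μ := by
  classical
  have hext : ContinuousOn (Function.update f a y) K :=
    continuousOn_update_iff.2 ⟨hf, fun _ => hlim⟩
  have hint : IntegrableOn (Function.update f a y) (K \ {a}) μ :=
    (hext.integrableOn_compact' hK hK.measurableSet).mono_set sdiff_subset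
  exact hint.congr_fun (fun t ht => Function.update_of_ne ht.2 y f)
    (hK.measurableSet.diff (measurableSet_singleton a))

theorem integrableOn_zpow_mul_of_neg_one_le {k : ℤ} {h ψ : ℝ → ℝ} {h' ψ' a : ℝ} {K : Set ℝ}
    {μ : Measure ℝ} [IsFiniteMeasureOnCompacts μ] (hk : -1 ≤ k) (hK : IsCompact K) (haK : a ∈ K)
    (hc : ContinuousOn h K) (ψc : ContinuousOn ψ K)
    (hder : HasDerivWithinAt h h' K a) (ψder : HasDerivWithinAt ψ ψ' K a)
    (ha : h a = 0) (h'a : h' ≠ 0) (hne : ∀ t ∈ K \ {a}, h t ≠ 0) (ψa : ψ a = 0) :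
    IntegrableOn (fun t => h t ^ k * ψ t) (K \ {a}) μ := by
  have hpow : ContinuousOn (fun t => h t ^ (k + 1)) K :=
    hc.zpow₀ (k + 1) fun _ _ => Or.inr (by lia)
  have hquot : ContinuousOn (fun t => ψ t / h t) (K \ {a}) :=
    (ψc.mono sdiff_subset).div (hc.mono sdiff_subset) hne
  have hquot_lim : Tendsto (fun t => ψ t / h t) (𝓝[K \ {a}] a) (𝓝 (ψ' / h')) :=
    tendsto_div_of_hasDerivWithinAt ψder hder ψa ha h'a
  have hint : IntegrableOn (fun t => h t ^ (k + 1) * (ψ t / h t)) (K \ {a}) μ :=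
    integrableOn_diff_singleton_of_tendsto hK ((hpow.mono sdiff_subset).mul hquot)
      (((hpow a haK).mono sdiff_subset).tendsto.mul hquot_lim)
  refine hint.congr_fun (fun t ht => ?_) (hK.measurableSet.diff (measurableSet_singleton a))
  have hht : h t ≠ 0 := hne t ht
  simp only [zpow_add_one₀ hht]
  field_simp

section IntegratingFactor

variable {𝕜 : Type*} [NontriviallyNormedField 𝕜] {k : ℤ} {h u : 𝕜 → 𝕜} {h' u' t : 𝕜}

theorem hasDerivAt_zpow_mul (hh : HasDerivAt h h' t) (hu : HasDerivAt u u' t) (hne : h t ≠ 0) :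
    HasDerivAt (fun s => h s ^ k * u s) (h t ^ k * (u' + k * (h' / h t) * u t)) t := by
  have hpow : HasDerivAt (fun s => h s ^ k) (k * h t ^ (k - 1) * h') t :=
    (hasDerivAt_zpow k (h t) (Or.inl hne)).comp t hh
  refine (hpow.mul hu).congr_deriv ?_
  rw [zpow_sub_one₀ hne]
  ring

theorem hasDerivAt_zpow_mul_of_ode {c y : 𝕜} (hh : HasDerivAt h h' t) (hu : HasDerivAt u u' t)
    (hne : h t ≠ 0) (ode : u' + k * (h' / h t) * u t - c * y / h t ^ 2 = 0) :
    HasDerivAt (fun s => h s ^ k * u s) (c * (h t ^ (k - 2) * y)) t := by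
  refine (hasDerivAt_zpow_mul hh hu hne).congr_deriv ?_
  rw [sub_eq_zero.1 ode, zpow_sub₀ hne, zpow_ofNat]
  ring

end IntegratingFactor

theorem zpow_mul_eq_integral_of_ode {k : ℤ} {c a b : ℝ} {h h' ψ u u' : ℝ → ℝ} (hk : 0 < k)
    (hab : a ≤ b) (hc : ContinuousOn h (Icc a b)) (uc : ContinuousOn u (Icc a b))
    (hder : ∀ t ∈ Ioo a b, HasDerivAt h (h' t) t) (uder : ∀ t ∈ Ioo a b, HasDerivAt u (u' t) t)
    (ha : h a = 0) (hne : ∀ t ∈ Ioo a b, h t ≠ 0)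
    (ode : ∀ t ∈ Ioo a b, u' t + k * (h' t / h t) * u t - c * ψ t / h t ^ 2 = 0)
    (hint : IntegrableOn (fun t => h t ^ (k - 2) * ψ t) (Ioo a b)) :
    h b ^ k * u b = c * ∫ t in a..b, h t ^ (k - 2) * ψ t := by
  have hcont : ContinuousOn (fun t => h t ^ k * u t) (Icc a b) :=
    (hc.zpow₀ k fun _ _ => Or.inr hk.le).mul uc
  have hderiv : ∀ t ∈ Ioo a b,
      HasDerivAt (fun s => h s ^ k * u s) (c * (h t ^ (k - 2) * ψ t)) t := fun t ht =>
    hasDerivAt_zpow_mul_of_ode (hder t ht) (uder t ht) (hne t ht) (ode t ht)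
  have hzero : h a ^ k * u a = 0 := by rw [ha, zero_zpow k hk.ne', zero_mul]
  have hFTC := intervalIntegral.integral_eq_sub_of_hasDerivAt_of_le hab hcont hderiv
    (((intervalIntegrable_iff_integrableOn_Ioo_of_le hab).2 hint).const_mul c)
  rw [intervalIntegral.integral_const_mul, hzero, sub_zero] at hFTC
  exact hFTC.symm

theorem stmt_0_general {k : ℤ} {c a b : ℝ} {h h' ψ ψ' ψ'' : ℝ → ℝ} (hk : 1 ≤ k)
    (hder : ∀ r ∈ Icc a b, HasDerivWithinAt h (h' r) (Icc a b) r)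
    (ψder : ∀ r ∈ Icc a b, HasDerivWithinAt ψ (ψ' r) (Icc a b) r)
    (ψ'der : ∀ r ∈ Icc a b, HasDerivWithinAt ψ' (ψ'' r) (Icc a b) r)
    (ha : h a = 0) (h'a : h' a ≠ 0) (hne : ∀ r ∈ Ioc a b, h r ≠ 0) (ψa : ψ a = 0)
    (ode : ∀ r ∈ Ioc a b, ψ'' r + k * (h' r / h r) * ψ' r - c * ψ r / h r ^ 2 = 0) :
    ∀ r ∈ Ioc a b, IntegrableOn (fun t => h t ^ (k - 2) * ψ t) (Ioo a r) ∧
      h r ^ k * ψ' r = c * ∫ t in a..r, h t ^ (k - 2) * ψ t := by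
  intro r hr
  have haI : a ∈ Icc a b := left_mem_Icc.2 (hr.1.le.trans hr.2)
  have hsub : Icc a r ⊆ Icc a b := Icc_subset_Icc_right hr.2
  have hsub' : Ioo a r ⊆ Ioc a b := fun _ ht => ⟨ht.1, ht.2.le.trans hr.2⟩
  have hnhds : ∀ t ∈ Ioo a r, Icc a b ∈ 𝓝 t := fun t ht =>
    Icc_mem_nhds ht.1 (ht.2.trans_le hr.2)
  have hc : ContinuousOn h (Icc a b) := HasDerivWithinAt.continuousOn hder
  have ψc : ContinuousOn ψ (Icc a b) := HasDerivWithinAt.continuousOn ψder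
  have ψ'c : ContinuousOn ψ' (Icc a b) := HasDerivWithinAt.continuousOn ψ'der
  have hint : IntegrableOn (fun t => h t ^ (k - 2) * ψ t) (Ioc a b) := by
    rw [← Icc_sdiff_left] at hne ⊢
    exact integrableOn_zpow_mul_of_neg_one_le (by lia) isCompact_Icc haI hc ψc
      (hder a haI) (ψder a haI) ha h'a hne ψa
  refine ⟨hint.mono_set hsub', zpow_mul_eq_integral_of_ode (by lia) hr.1.le (hc.mono hsub)
    (ψ'c.mono hsub) (fun t ht => ?_) (fun t ht => ?_) ha (fun t ht => hne t (hsub' ht))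
    (fun t ht => ode t (hsub' ht)) (hint.mono_set hsub')⟩
  · exact (hder t (mem_of_mem_nhds (hnhds t ht))).hasDerivAt (hnhds t ht)
  · exact (ψ'der t (mem_of_mem_nhds (hnhds t ht))).hasDerivAt (hnhds t ht)

/-- Integrated form of the separation-of-variables ODE for Karpukhin's Steklov problem
on coclosed p-forms on a warped product, in the case 2p ≤ n-2. -/
theorem stmt_0
    (n p m : ℤ) (hn : 3 ≤ n) (hp : 1 ≤ p) (hm : 1 ≤ m)
    (R : ℝ) (hR : 0 < R)
    (h h' h'' ψ ψ' ψ'' : ℝ → ℝ)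
    (hder1 : ∀ r ∈ Set.Icc (0:ℝ) R, HasDerivWithinAt h (h' r) (Set.Icc 0 R) r)
    (hder2 : ∀ r ∈ Set.Icc (0:ℝ) R, HasDerivWithinAt h' (h'' r) (Set.Icc 0 R) r)
    (hcont2 : ContinuousOn h'' (Set.Icc 0 R))
    (pder1 : ∀ r ∈ Set.Icc (0:ℝ) R, HasDerivWithinAt ψ (ψ' r) (Set.Icc 0 R) r)
    (pder2 : ∀ r ∈ Set.Icc (0:ℝ) R, HasDerivWithinAt ψ' (ψ'' r) (Set.Icc 0 R) r)
    (pcont2 : ContinuousOn ψ'' (Set.Icc 0 R))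
    (h0 : h 0 = 0) (h'0 : h' 0 = 1)
    (hpos : ∀ r ∈ Set.Ioc (0:ℝ) R, 0 < h r)
    (ψ0 : ψ 0 = 0)
    (ode : ∀ r ∈ Set.Ioc (0:ℝ) R,
      ψ'' r + ((n - 2 * p - 1 : ℤ) : ℝ) * (h' r / h r) * ψ' r
        - (((m + p) * (n + m - p - 2) : ℤ) : ℝ) * ψ r / (h r) ^ 2 = 0)
    (hp2 : 2 * p ≤ n - 2) :
    ∀ r ∈ Set.Ioc (0:ℝ) R,
      MeasureTheory.IntegrableOn (fun t => h t ^ (n - 2 * p - 3) * ψ t) (Set.Ioo 0 r) ∧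
      h r ^ (n - 2 * p - 1) * ψ' r
        = (((m + p) * (n + m - p - 2) : ℤ) : ℝ)
            * ∫ t in (0:ℝ)..r, h t ^ (n - 2 * p - 3) * ψ t := by
  rw [show n - 2 * p - 3 = n - 2 * p - 1 - 2 by ring]
  exact stmt_0_general (by lia) hder1 pder1 pder2 h0 (h'0 ▸ one_ne_zero)
    (fun r hr => (hpos r hr).ne') ψ0 ode
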